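/- Let A be a σ-unital C*-algebra, τ a densely defined lower semicontinuous tracial weight on A extended to a normal tracial weight on the bidual A**, and let Tₙ, T ∈ M(A)₊ with ‖T‖ ≤ 1, Tₙ ≤ T_{n+1} for all n, and Tₙ → T strictly. Then for every δ ≥ 0, d_τ((Tₙ − δ)₊) increases to d_τ((T − δ)₊). -/

import Mathlib

open Filter Topology ENNReal
open scoped MultiplierAlgebra

def StrictTendsto {A : Type*} [NonUnitalCStarAlgebra A]
    (T : ℕ → 𝓜(ℂ, A)) (L : 𝓜(ℂ, A)) : Prop :=
  ∀ a : A,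
    Tendsto (fun n => ‖(T n - L) * (a : 𝓜(ℂ, A))‖) atTop (𝓝 0) ∧
    Tendsto (fun n => ‖(a : 𝓜(ℂ, A)) * (T n - L)‖) atTop (𝓝 0)

/-- `A` is σ-unital: it admits a countable (sequential) approximate identity. -/
def SigmaUnital (A : Type*) [NonUnitalCStarAlgebra A] : Prop :=
  ∃ e : ℕ → A, ∀ a : A,
    Tendsto (fun n => ‖a - a * e n‖) atTop (𝓝 0) ∧
    Tendsto (fun n => ‖a - e n * a‖) atTop (𝓝 0)

/-- A tracial weight on the positive cone (here on the multiplier algebra,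
modelling the canonical extension of a densely defined lower semicontinuous
tracial weight on `A` to a normal trace on `A**`, restricted to `M(A)`). -/
def IsTracialWeight {M : Type*} [CStarAlgebra M] [PartialOrder M] [StarOrderedRing M] (τ : M → ℝ≥0∞) : Prop :=
  (∀ x y : M, 0 ≤ x → 0 ≤ y → τ (x + y) = τ x + τ y) ∧
  (∀ (c : ℝ) (x : M), 0 ≤ c → 0 ≤ x → τ (c • x) = ENNReal.ofReal c * τ x) ∧
  (∀ x : M, τ (x * star x) = τ (star x * x)) ∧
  (∀ (x : M) (u : ℕ → M), 0 ≤ x → (∀ n, 0 ≤ u n) →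
    Tendsto (fun n => ‖u n - x‖) atTop (𝓝 0) →
    τ x ≤ Filter.liminf (fun n => τ (u n)) atTop)

noncomputable def dimFn {M : Type*} [CStarAlgebra M] (τ : M → ℝ≥0∞) (x : M) : ℝ≥0∞ :=
  ⨆ n : ℕ, τ (cfc (fun t : ℝ => t ^ ((1 : ℝ) / (n + 1))) x)

noncomputable def cutoff {M : Type*} [CStarAlgebra M] (a : M) (δ : ℝ) : M :=
  cfc (fun t : ℝ => max (t - δ) 0) a


section TracialWeight

variable {M : Type*} [CStarAlgebra M] [PartialOrder M] [StarOrderedRing M]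

lemma spectrum_subset_Icc_of_nonneg {a : M} (ha : 0 ≤ a) {C : ℝ} (hC : ‖a‖ ≤ C) :
    spectrum ℝ a ⊆ Set.Icc 0 C := by
  intro t ht
  refine ⟨spectrum_nonneg_of_nonneg ha ht, ?_⟩
  have h := (CStarAlgebra.norm_le_iff_le_algebraMap a ((norm_nonneg a).trans hC) ha).1 hC
  exact (le_algebraMap_iff_spectrum_le (IsSelfAdjoint.of_nonneg ha)).1 h t ht

lemma exists_polynomial_cfc_near (M : Type*) [CStarAlgebra M] [PartialOrder M]
    [StarOrderedRing M] {C : ℝ} {f : ℝ → ℝ} (hf : ContinuousOn f (Set.Icc 0 C))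
    {ε : ℝ} (hε : 0 < ε) :
    ∃ p : Polynomial ℝ, ∀ a : M, 0 ≤ a → ‖a‖ ≤ C →
      ‖cfc f a - Polynomial.aeval a p‖ ≤ ε := by
  obtain ⟨p, hp⟩ := exists_polynomial_near_of_continuousOn 0 C f hf ε hε
  refine ⟨p, fun a ha hC => ?_⟩
  have hs := spectrum_subset_Icc_of_nonneg ha hC
  have hsa : IsSelfAdjoint a := .of_nonneg ha
  rw [← cfc_polynomial p a, ← cfc_sub f p.eval a (hf.mono hs)]
  refine norm_cfc_le hε.le fun x hx => ?_
  rw [norm_sub_rev]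
  exact (hp x (hs hx)).le

lemma SemiconjBy.aeval_polynomial {R B : Type*} [CommSemiring R] [Semiring B] [Algebra R B]
    {y a b : B} (h : SemiconjBy y a b) (p : Polynomial R) :
    SemiconjBy y (Polynomial.aeval a p) (Polynomial.aeval b p) := by
  induction p using Polynomial.induction_on' with
  | add p q hp hq => simpa using hp.add_right hq
  | monomial n r =>
    simp only [Polynomial.aeval_monomial]
    exact SemiconjBy.mul_right (Algebra.commutes r y).symm (h.pow_right n)

lemma semiconjBy_cfc_star_mul_self {y : M} {f : ℝ → ℝ}
    (hf : ContinuousOn f (Set.Icc 0 (‖y‖ ^ 2))) :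
    SemiconjBy y (cfc f (star y * y)) (cfc f (y * star y)) := by
  refine eq_of_forall_dist_le fun ε hε => ?_
  obtain ⟨p, hp⟩ := exists_polynomial_cfc_near M hf
    (show 0 < ε / (2 * ‖y‖ + 1) by positivity)
  have h₁ := hp (star y * y) (star_mul_self_nonneg y) (by rw [CStarRing.norm_star_mul_self, sq])
  have h₂ := hp (y * star y) (mul_star_self_nonneg y) (by rw [CStarRing.norm_self_mul_star, sq])
  have hp' : y * Polynomial.aeval (star y * y) p = Polynomial.aeval (y * star y) p * y :=
    SemiconjBy.aeval_polynomial (by simp [SemiconjBy, mul_assoc]) p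
  have key : y * cfc f (star y * y) - cfc f (y * star y) * y =
      y * (cfc f (star y * y) - Polynomial.aeval (star y * y) p) -
        (cfc f (y * star y) - Polynomial.aeval (y * star y) p) * y := by
    rw [mul_sub, sub_mul, hp']; abel
  rw [dist_eq_norm, key]
  calc _ ≤ ‖y‖ * (ε / (2 * ‖y‖ + 1)) + (ε / (2 * ‖y‖ + 1)) * ‖y‖ := by
        refine (norm_sub_le _ _).trans (add_le_add ?_ ?_)
        · exact (norm_mul_le _ _).trans (by gcongr)
        · exact (norm_mul_le _ _).trans (by gcongr)
    _ = ε * (2 * ‖y‖ / (2 * ‖y‖ + 1)) := by ring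
    _ ≤ ε * 1 := by
        gcongr
        rw [div_le_one (by positivity)]
        linarith
    _ = ε := mul_one ε

namespace IsTracialWeight

variable {τ : M → ℝ≥0∞}

lemma mono (hτ : IsTracialWeight τ) {x y : M} (hx : 0 ≤ x) (hxy : x ≤ y) : τ x ≤ τ y := by
  have h := hτ.1 x (y - x) hx (sub_nonneg.2 hxy)
  rw [add_sub_cancel] at h
  exact h ▸ le_self_add

/-- A tracial weight takes the same value on `f (y y*)` and `f (y* y)` when `f t = t * h t ^ 2`. -/
lemma cfc_mul_star_self (hτ : IsTracialWeight τ) (y : M) {h : ℝ → ℝ}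
    (hh : ContinuousOn h (Set.Ici 0)) :
    τ (cfc (fun t : ℝ => t * h t ^ 2) (y * star y)) =
      τ (cfc (fun t : ℝ => t * h t ^ 2) (star y * y)) := by
  have hc : ∀ a : M, 0 ≤ a → ContinuousOn h (spectrum ℝ a) := fun a ha =>
    hh.mono fun t ht => spectrum_nonneg_of_nonneg ha ht
  have hs := semiconjBy_cfc_star_mul_self (y := y) (hh.mono fun t ht => ht.1)
  have hsa : star (cfc h (star y * y)) = cfc h (star y * y) := (cfc_predicate h (star y * y)).star_eq
  have hfac : ∀ a : M, 0 ≤ a →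
      cfc (fun t : ℝ => t * h t ^ 2) a = a * cfc h a * cfc h a := fun a ha => by
    have hcf := hc a ha
    rw [cfc_mul (fun t => t) (fun t => h t ^ 2) a continuousOn_id (hcf.pow 2),
      cfc_pow h 2 a hcf, cfc_id' ℝ a, sq, mul_assoc]
  have hcomm : Commute (star y * y) (cfc h (star y * y)) := by
    simpa only [cfc_id' ℝ (star y * y)] using cfc_commute_cfc (fun t => t) h (star y * y)
  have hcomm' : Commute (y * star y) (cfc h (y * star y)) := by
    simpa only [cfc_id' ℝ (y * star y)] using cfc_commute_cfc (fun t => t) h (y * star y)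
  have ht := hτ.2.2.1 (y * cfc h (star y * y))
  have e₁ : y * cfc h (star y * y) * star (y * cfc h (star y * y)) =
      cfc (fun t : ℝ => t * h t ^ 2) (y * star y) := by
    have hsa' : star (cfc h (y * star y)) = cfc h (y * star y) :=
      (cfc_predicate h (y * star y)).star_eq
    rw [hfac _ (mul_star_self_nonneg y), hs.eq, star_mul, hsa', hcomm'.eq]
    simp only [mul_assoc]
  have e₂ : star (y * cfc h (star y * y)) * (y * cfc h (star y * y)) =
      cfc (fun t : ℝ => t * h t ^ 2) (star y * y) := by
    rw [hfac _ (star_mul_self_nonneg y), star_mul, hsa, hcomm.eq]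
    simp only [mul_assoc]
  rwa [e₁, e₂] at ht

lemma cfc_rpow_mul_star_self_le (hτ : IsTracialWeight τ) (y : M) {s : ℝ} (hs₀ : 0 < s)
    (hs₁ : s ≤ 1) :
    τ (cfc (fun t : ℝ => t ^ s) (y * star y)) ≤ τ (cfc (fun t : ℝ => t ^ s) (star y * y)) := by
  set h : ℕ → ℝ → ℝ := fun n t => √(t ^ s / (t + 1 / ((n : ℝ) + 1))) with hdef
  have hε : ∀ n : ℕ, 0 < 1 / ((n : ℝ) + 1) := fun n => Nat.one_div_pos_of_nat
  have hsq : ∀ (n : ℕ) (t : ℝ), 0 ≤ t → h n t ^ 2 = t ^ s / (t + 1 / ((n : ℝ) + 1)) :=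
    fun n t ht => Real.sq_sqrt (by have := hε n; positivity)
  have hcont : ContinuousOn (fun t : ℝ => t ^ s) (Set.Ici 0) :=
    (Real.continuous_rpow_const hs₀.le).continuousOn
  have hh : ∀ n, ContinuousOn (h n) (Set.Ici 0) := fun n =>
    (hcont.div (by fun_prop) fun t (ht : 0 ≤ t) => by have := hε n; positivity).sqrt
  have hth : ∀ n, ContinuousOn (fun t : ℝ => t * h n t ^ 2) (Set.Ici 0) := fun n =>
    continuousOn_id.mul ((hh n).pow 2)
  have hnonneg : ∀ (n : ℕ) (a : M), 0 ≤ a → 0 ≤ cfc (fun t : ℝ => t * h n t ^ 2) a :=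
    fun n a ha => cfc_nonneg fun t ht => by
      have := spectrum_nonneg_of_nonneg ha ht
      positivity
  have hy := mul_star_self_nonneg y
  have hy' := star_mul_self_nonneg y
  have hspec : ∀ a : M, 0 ≤ a → spectrum ℝ a ⊆ Set.Ici 0 := fun a ha t ht =>
    spectrum_nonneg_of_nonneg ha ht
  have hlim : Tendsto (fun n => ‖cfc (fun t : ℝ => t * h n t ^ 2) (y * star y) -
      cfc (fun t : ℝ => t ^ s) (y * star y)‖) atTop (𝓝 0) := by
    have h₀ : Tendsto (fun n : ℕ => (1 / ((n : ℝ) + 1)) ^ s) atTop (𝓝 0) := by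
      simpa [Real.zero_rpow hs₀.ne'] using
        tendsto_one_div_add_atTop_nhds_zero_nat.rpow_const (Or.inr hs₀.le)
    refine squeeze_zero (fun _ => norm_nonneg _) (fun n => ?_) h₀
    rw [← cfc_sub _ _ _ ((hth n).mono (hspec _ hy)) (hcont.mono (hspec _ hy))]
    refine norm_cfc_le (by have := hε n; positivity) fun t ht => ?_
    have ht₀ : 0 ≤ t := spectrum_nonneg_of_nonneg hy ht
    rw [hsq n t ht₀]
    generalize hgen : 1 / ((n : ℝ) + 1) = ε
    have hε₀ : 0 < ε := hgen ▸ hε n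
    have hamgm := Real.geom_mean_le_arith_mean2_weighted hs₀.le (sub_nonneg.2 hs₁) ht₀ hε₀.le
      (add_sub_cancel s 1)
    have hsplit : ε ^ (1 - s) * ε ^ s = ε := by
      rw [← Real.rpow_add hε₀, sub_add_cancel, Real.rpow_one]
    have hne : t + ε ≠ 0 := by positivity
    have heq : t * (t ^ s / (t + ε)) - t ^ s = -(t ^ s * ε / (t + ε)) := by
      field_simp
      ring
    rw [heq, norm_neg, Real.norm_of_nonneg (by positivity), div_le_iff₀ (by positivity)]
    calc t ^ s * ε = (t ^ s * ε ^ (1 - s)) * ε ^ s := by rw [mul_assoc, hsplit]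
      _ ≤ (t + ε) * ε ^ s := by
          gcongr
          nlinarith
      _ = ε ^ s * (t + ε) := mul_comm _ _
  have hpos : 0 ≤ cfc (fun t : ℝ => t ^ s) (y * star y) := cfc_nonneg fun t ht =>
    Real.rpow_nonneg (spectrum_nonneg_of_nonneg hy ht) s
  refine (hτ.2.2.2 _ _ hpos (fun n => hnonneg n _ hy) hlim).trans ?_
  refine liminf_le_of_le (by isBoundedDefault) fun b hb => ?_
  obtain ⟨n, hn⟩ := hb.exists
  refine hn.trans ?_
  rw [hτ.cfc_mul_star_self y (hh n)]
  refine hτ.mono (hnonneg n _ hy') (cfc_mono (fun t ht => ?_) ((hth n).mono (hspec _ hy'))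
    (hcont.mono (hspec _ hy')))
  have ht₀ : 0 ≤ t := spectrum_nonneg_of_nonneg hy' ht
  have := hε n
  rw [hsq n t ht₀, ← mul_div_assoc, div_le_iff₀ (by positivity), mul_comm]
  gcongr
  linarith

lemma cfc_rpow_mono (hτ : IsTracialWeight τ) {a b : M} (ha : 0 ≤ a) (hab : a ≤ b) {s : ℝ}
    (hs : s ∈ Set.Icc (0 : ℝ) 1) :
    τ (cfc (fun t : ℝ => t ^ s) a) ≤ τ (cfc (fun t : ℝ => t ^ s) b) := by
  rw [← CFC.rpow_eq_cfc_real ha, ← CFC.rpow_eq_cfc_real (ha.trans hab)]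
  exact hτ.mono CFC.rpow_nonneg (CFC.rpow_le_rpow hs hab)

lemma dimFn_cutoff_mono (hτ : IsTracialWeight τ) {a b : M} (ha : 0 ≤ a) (hab : a ≤ b)
    (hb : ‖b‖ ≤ 1) {δ : ℝ} (hδ : 0 ≤ δ) :
    dimFn τ (cutoff a δ) ≤ dimFn τ (cutoff b δ) := by
  have hsa : IsSelfAdjoint a := .of_nonneg ha
  have hsb : IsSelfAdjoint b := .of_nonneg (ha.trans hab)
  have ha₁ : ‖a‖ ≤ 1 := (CStarAlgebra.norm_le_norm_of_nonneg_of_le ha hab).trans hb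
  set f := cutoff a δ with hf
  set c := cfc (fun t : ℝ => √(max (t - δ) 0)) b with hc
  have hf₀ : 0 ≤ f := cfc_nonneg fun t _ => le_max_right _ _
  have hfsa : star f = f := (IsSelfAdjoint.of_nonneg hf₀).star_eq
  have hcsa : star c = c := (cfc_predicate _ b : IsSelfAdjoint c).star_eq
  have hcc : c * c = cutoff b δ := by
    rw [hc, ← cfc_mul _ _ b]
    exact cfc_congr fun t _ => Real.mul_self_sqrt (le_max_right _ _)
  have hff : f * f ≤ 1 := by
    rw [hf, cutoff, ← cfc_mul _ _ a]
    refine cfc_le_one _ a fun t ht => ?_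
    have ht := spectrum_subset_Icc_of_nonneg ha ha₁ ht
    have h₁ : max (t - δ) 0 ≤ 1 := max_le (by linarith [ht.2]) zero_le_one
    nlinarith [le_max_right (t - δ) 0]
  have hcube : f ^ 3 ≤ f * cutoff b δ * f := by
    have hδa : ∀ x : M, IsSelfAdjoint x →
        cfc (fun t : ℝ => t - δ) x = x - algebraMap ℝ M δ := fun x hx => by
      rw [cfc_sub (fun t => t) (fun _ => δ) x, cfc_id' ℝ x, cfc_const δ x]
    have h₁ : f ^ 3 = f * (a - algebraMap ℝ M δ) * f := by
      rw [← hδa a hsa, hf, cutoff, ← cfc_pow _ 3 a, ← cfc_mul _ _ a, ← cfc_mul _ _ a]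
      refine cfc_congr fun t _ => ?_
      rcases le_total (t - δ) 0 with h | h
      · simp [h]
      · simp only [max_eq_left h]
        ring
    have h₂ : a - algebraMap ℝ M δ ≤ cutoff b δ := calc
      _ ≤ b - algebraMap ℝ M δ := sub_le_sub_right hab _
      _ = cfc (fun t : ℝ => t - δ) b := (hδa b hsb).symm
      _ ≤ _ := cfc_mono fun t _ => le_max_left _ _
    rw [h₁]
    simpa only [hfsa] using star_left_conjugate_le_conjugate h₂ f
  refine iSup_le fun n => ?_
  have hexp : (1 : ℝ) / (((3 * n + 2 : ℕ) : ℝ) + 1) = 1 / (n + 1) / 3 := by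
    push_cast
    field_simp
    ring
  have hmem : (1 : ℝ) / (((3 * n + 2 : ℕ) : ℝ) + 1) ∈ Set.Ioc (0 : ℝ) 1 :=
    ⟨by positivity, (div_le_one (by positivity)).2 (by push_cast; linarith [n.cast_nonneg (α := ℝ)])⟩
  have hf₃ : 0 ≤ f ^ 3 := by
    simpa [pow_succ, hfsa, mul_assoc] using star_left_conjugate_nonneg hf₀ f
  have hroot : cfc (fun t : ℝ => t ^ ((1 : ℝ) / (n + 1))) f =
      cfc (fun t : ℝ => t ^ ((1 : ℝ) / (((3 * n + 2 : ℕ) : ℝ) + 1))) (f ^ 3) := by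
    rw [← cfc_comp_pow _ 3 f (Real.continuous_rpow_const hmem.1.le).continuousOn]
    refine cfc_congr fun t ht => ?_
    have ht₀ : 0 ≤ t := spectrum_nonneg_of_nonneg hf₀ ht
    rw [hexp]
    rw [← Real.rpow_natCast, ← Real.rpow_mul ht₀]
    congr 1
    push_cast
    field_simp
  rw [hroot]
  refine le_trans ?_ (le_iSup _ (3 * n + 2))
  refine (hτ.cfc_rpow_mono hf₃ hcube (Set.Ioc_subset_Icc_self hmem)).trans ?_
  have e₁ : f * cutoff b δ * f = (f * c) * star (f * c) := by
    rw [← hcc, star_mul, hfsa, hcsa]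
    simp only [mul_assoc]
  have e₂ : star (f * c) * (f * c) ≤ cutoff b δ := calc
    _ = star c * (f * f) * c := by rw [star_mul, hfsa]; simp only [mul_assoc]
    _ ≤ star c * 1 * c := star_left_conjugate_le_conjugate hff c
    _ = _ := by rw [mul_one, hcsa, hcc]
  rw [e₁]
  exact (hτ.cfc_rpow_mul_star_self_le _ hmem.1 hmem.2).trans
    (hτ.cfc_rpow_mono (star_mul_self_nonneg _) e₂ (Set.Ioc_subset_Icc_self hmem))

end IsTracialWeight

end TracialWeight

section MultiplierAlgebra

variable {A : Type*} [NonUnitalCStarAlgebra A]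

namespace DoubleCentralizer

lemma fst_mul (m : 𝓜(ℂ, A)) (a x : A) : m.fst (a * x) = m.fst a * x := by
  rw [← sub_eq_zero, ← CStarRing.star_mul_self_eq_zero_iff, mul_sub, ← m.central, ← mul_assoc,
    ← mul_assoc, ← m.central, sub_self]

lemma mul_coe (m : 𝓜(ℂ, A)) (a : A) : m * (a : 𝓜(ℂ, A)) = (m.fst a : A) := by
  refine ext _ _ _ _ (Prod.ext ?_ ?_) <;> refine ContinuousLinearMap.ext fun x => ?_
  · exact fst_mul m a x
  · exact m.central x a

lemma star_coe (a : A) : star (a : 𝓜(ℂ, A)) = (star a : A) :=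
  (map_star (coeHom (𝕜 := ℂ) (A := A)) a).symm

lemma coe_mul_eq (a b : A) : (a : 𝓜(ℂ, A)) * (b : 𝓜(ℂ, A)) = (a * b : A) :=
  (map_mul (coeHom (𝕜 := ℂ) (A := A)) a b).symm

lemma coe_sub_eq (a b : A) : (a : 𝓜(ℂ, A)) - (b : 𝓜(ℂ, A)) = (a - b : A) :=
  (map_sub (coeHom (𝕜 := ℂ) (A := A)) a b).symm

lemma norm_coe (a : A) : ‖(a : 𝓜(ℂ, A))‖ = ‖a‖ := by
  rw [← norm_fst, coe_fst, ContinuousLinearMap.opNorm_mul_apply]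

lemma eq_zero_of_mul_coe {m : 𝓜(ℂ, A)} (h : ∀ a : A, m * (a : 𝓜(ℂ, A)) = 0) : m = 0 := by
  have hfst : m.fst = 0 := ContinuousLinearMap.ext fun a => by
    have := h a
    rw [mul_coe, ← norm_eq_zero, norm_coe, norm_eq_zero] at this
    simpa using this
  rw [← norm_eq_zero, ← norm_fst, hfst, norm_zero]

variable [PartialOrder 𝓜(ℂ, A)] [StarOrderedRing 𝓜(ℂ, A)]

lemma nonneg_of_forall_conjugate_nonneg {x : 𝓜(ℂ, A)} (hx : IsSelfAdjoint x)
    (h : ∀ a : A, 0 ≤ star (a : 𝓜(ℂ, A)) * x * (a : 𝓜(ℂ, A))) : 0 ≤ x := by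
  have hneg : 0 ≤ x⁻ := CFC.negPart_nonneg x
  have hnsa : star x⁻ = x⁻ := (IsSelfAdjoint.of_nonneg hneg).star_eq
  set s := CFC.sqrt x⁻ with hs
  have hss : s * s = x⁻ := CFC.sqrt_mul_sqrt_self x⁻ hneg
  have hssa : star s = s := (IsSelfAdjoint.of_nonneg (CFC.sqrt_nonneg x⁻)).star_eq
  have hxneg : x * x⁻ = -(x⁻ * x⁻) := by
    nth_rw 1 [← CFC.posPart_sub_negPart x hx]
    rw [sub_mul, CFC.posPart_mul_negPart, zero_sub]
  have hzero : s * x⁻ = 0 := eq_zero_of_mul_coe fun a => by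
    rw [← CStarRing.star_mul_self_eq_zero_iff]
    have hsq : star (s * x⁻ * (a : 𝓜(ℂ, A))) * (s * x⁻ * (a : 𝓜(ℂ, A))) =
        -(star (x⁻ * (a : 𝓜(ℂ, A))) * x * (x⁻ * (a : 𝓜(ℂ, A)))) := by
      have e : star (x⁻ * (a : 𝓜(ℂ, A))) * x * (x⁻ * (a : 𝓜(ℂ, A))) =
          star (x⁻ * (a : 𝓜(ℂ, A))) * (x * x⁻) * (a : 𝓜(ℂ, A)) := by simp only [mul_assoc]
      rw [e, hxneg]
      simp only [star_mul, hssa, hnsa, mul_neg, neg_mul, neg_neg, mul_assoc]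
      rw [← mul_assoc s s, hss]
    refine le_antisymm ?_ (star_mul_self_nonneg _)
    rw [hsq, neg_nonpos, mul_coe]
    exact h _
  have hneg₀ : x⁻ = 0 := by
    rw [← CStarRing.star_mul_self_eq_zero_iff, hnsa]
    nth_rw 1 [← hss]
    rw [mul_assoc, hzero, mul_zero]
  rw [← CFC.posPart_sub_negPart x hx, hneg₀, sub_zero]
  exact CFC.posPart_nonneg x

end DoubleCentralizer

open DoubleCentralizer

namespace StrictTendsto

variable {T : ℕ → 𝓜(ℂ, A)} {L : 𝓜(ℂ, A)}

lemma tendsto_mul_coe (h : StrictTendsto T L) (a : A) :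
    Tendsto (fun n => T n * (a : 𝓜(ℂ, A))) atTop (𝓝 (L * (a : 𝓜(ℂ, A)))) := by
  rw [tendsto_iff_norm_sub_tendsto_zero]
  simpa only [sub_mul] using (h a).1

lemma tendsto_coe_mul (h : StrictTendsto T L) (a : A) :
    Tendsto (fun n => (a : 𝓜(ℂ, A)) * T n) atTop (𝓝 ((a : 𝓜(ℂ, A)) * L)) := by
  rw [tendsto_iff_norm_sub_tendsto_zero]
  simpa only [mul_sub] using (h a).2

lemma of_isSelfAdjoint (hT : ∀ n, IsSelfAdjoint (T n)) (hL : IsSelfAdjoint L)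
    (h : ∀ a : A, Tendsto (fun n => T n * (a : 𝓜(ℂ, A))) atTop (𝓝 (L * (a : 𝓜(ℂ, A))))) :
    StrictTendsto T L := fun a => by
  have key : ∀ b : A, Tendsto (fun n => ‖(T n - L) * (b : 𝓜(ℂ, A))‖) atTop (𝓝 0) := fun b => by
    simpa only [sub_mul] using tendsto_iff_norm_sub_tendsto_zero.1 (h b)
  refine ⟨key a, (key (star a)).congr fun n => ?_⟩
  rw [← star_coe, ← norm_star, star_mul, star_star, ((hT n).sub hL).star_eq]

lemma isSelfAdjoint (h : StrictTendsto T L) (hT : ∀ n, IsSelfAdjoint (T n)) :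
    IsSelfAdjoint L := by
  refine (sub_eq_zero.1 (eq_zero_of_mul_coe fun a => ?_) : star L = L)
  rw [sub_mul, sub_eq_zero]
  have h₁ := (h.tendsto_coe_mul (star a)).star
  simp only [star_mul, star_coe, star_star, (hT _).star_eq] at h₁
  exact tendsto_nhds_unique h₁ (h.tendsto_mul_coe a)

lemma sub_const (h : StrictTendsto T L) (x : 𝓜(ℂ, A)) :
    StrictTendsto (fun n => T n - x) (L - x) := by
  simpa only [StrictTendsto, sub_sub_sub_cancel_right] using h

lemma comp_add (h : StrictTendsto T L) (k : ℕ) : StrictTendsto (fun n => T (n + k)) L :=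
  fun a => ⟨(tendsto_add_atTop_iff_nat k).2 (h a).1, (tendsto_add_atTop_iff_nat k).2 (h a).2⟩

lemma tendsto_pow_mul_coe (h : StrictTendsto T L) (hT : ∀ n, ‖T n‖ ≤ 1) (k : ℕ) (a : A) :
    Tendsto (fun n => T n ^ k * (a : 𝓜(ℂ, A))) atTop (𝓝 (L ^ k * (a : 𝓜(ℂ, A)))) := by
  induction k generalizing a with
  | zero => simp
  | succ k ih =>
    have h₁ : Tendsto (fun n => T n ^ k * ((T n - L) * (a : 𝓜(ℂ, A)))) atTop (𝓝 0) := by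
      refine squeeze_zero_norm (fun n => ?_) (h a).1
      have hk : ‖T n ^ k‖ ≤ 1 := by
        rcases k.eq_zero_or_pos with rfl | hk
        · rw [pow_zero]
          rw [← norm_fst, one_fst]
          exact ContinuousLinearMap.norm_id_le
        · exact (norm_pow_le' _ hk).trans (pow_le_one₀ (norm_nonneg _) (hT n))
      exact (norm_mul_le _ _).trans (mul_le_of_le_one_left (norm_nonneg _) hk)
    have h₂ := h₁.add (ih (L.fst a))
    rw [zero_add, ← mul_coe, ← mul_assoc, ← pow_succ] at h₂
    refine h₂.congr fun n => ?_
    rw [pow_succ]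
    noncomm_ring

lemma tendsto_aeval_mul_coe (h : StrictTendsto T L) (hT : ∀ n, ‖T n‖ ≤ 1) (p : Polynomial ℝ)
    (a : A) :
    Tendsto (fun n => Polynomial.aeval (T n) p * (a : 𝓜(ℂ, A))) atTop
      (𝓝 (Polynomial.aeval L p * (a : 𝓜(ℂ, A)))) := by
  induction p using Polynomial.induction_on' with
  | add p q hp hq => simpa only [map_add, add_mul] using hp.add hq
  | monomial k r =>
    simpa only [Polynomial.aeval_monomial, mul_assoc] using
      (h.tendsto_pow_mul_coe hT k a).const_mul (algebraMap ℝ 𝓜(ℂ, A) r)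

variable [PartialOrder 𝓜(ℂ, A)] [StarOrderedRing 𝓜(ℂ, A)]

lemma nonneg (h : StrictTendsto T L) (hT : ∀ n, 0 ≤ T n) : 0 ≤ L := by
  refine nonneg_of_forall_conjugate_nonneg
    (h.isSelfAdjoint fun n => IsSelfAdjoint.of_nonneg (hT n)) fun a => ?_
  have h₁ := (h.tendsto_mul_coe a).const_mul (star (a : 𝓜(ℂ, A)))
  rw [← mul_assoc] at h₁
  refine ge_of_tendsto' h₁ fun n => ?_
  rw [← mul_assoc]
  exact star_left_conjugate_nonneg (hT n) _

lemma le_of_monotone (h : StrictTendsto T L) (hmono : Monotone T) (n : ℕ) :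
    T n ≤ L :=
  sub_nonneg.1 <| ((h.comp_add n).sub_const (T n)).nonneg fun _ =>
    sub_nonneg.2 (hmono (Nat.le_add_left _ _))

lemma cfc {f : ℝ → ℝ} (h : StrictTendsto T L) (hT : ∀ n, 0 ≤ T n) (hT₁ : ∀ n, ‖T n‖ ≤ 1)
    (hL₁ : ‖L‖ ≤ 1) (hf : ContinuousOn f (Set.Icc 0 1)) :
    StrictTendsto (fun n => cfc f (T n)) (cfc f L) := by
  refine of_isSelfAdjoint (fun n => cfc_predicate f (T n)) (cfc_predicate f L) fun a => ?_
  refine Metric.tendsto_atTop.2 fun ε hε => ?_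
  set C := ‖(a : 𝓜(ℂ, A))‖ with hC
  have hC₀ : 0 ≤ C := norm_nonneg _
  obtain ⟨p, hp⟩ := exists_polynomial_cfc_near 𝓜(ℂ, A) hf
    (show 0 < ε / 2 / (2 * C + 1) by positivity)
  obtain ⟨N, hN⟩ := Metric.tendsto_atTop.1 (h.tendsto_aeval_mul_coe hT₁ p a) (ε / 2) (half_pos hε)
  refine ⟨N, fun n hn => ?_⟩
  have h₁ := hp (T n) (hT n) (hT₁ n)
  have h₂ := hp L (h.nonneg hT) hL₁
  have h₃ := hN n hn
  rw [dist_eq_norm] at h₃ ⊢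
  have key : _root_.cfc f (T n) * (a : 𝓜(ℂ, A)) - _root_.cfc f L * (a : 𝓜(ℂ, A)) =
      (_root_.cfc f (T n) - Polynomial.aeval (T n) p) * (a : 𝓜(ℂ, A)) -
        (_root_.cfc f L - Polynomial.aeval L p) * (a : 𝓜(ℂ, A)) +
        (Polynomial.aeval (T n) p * (a : 𝓜(ℂ, A)) - Polynomial.aeval L p * (a : 𝓜(ℂ, A))) := by
    noncomm_ring
  rw [key]
  have hsmall : ε / 2 / (2 * C + 1) * C + ε / 2 / (2 * C + 1) * C ≤ ε / 2 := by
    have : ε / 2 / (2 * C + 1) * C + ε / 2 / (2 * C + 1) * C =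
        ε / 2 * (2 * C / (2 * C + 1)) := by ring
    rw [this]
    refine mul_le_of_le_one_right (by positivity) ?_
    rw [div_le_one (by positivity)]
    linarith
  have h₄ : ‖(_root_.cfc f (T n) - Polynomial.aeval (T n) p) * (a : 𝓜(ℂ, A)) -
      (_root_.cfc f L - Polynomial.aeval L p) * (a : 𝓜(ℂ, A))‖ ≤ ε / 2 :=
    (norm_sub_le _ _).trans <| (add_le_add
      ((norm_mul_le _ _).trans (mul_le_mul_of_nonneg_right h₁ hC₀))
      ((norm_mul_le _ _).trans (mul_le_mul_of_nonneg_right h₂ hC₀))).trans hsmall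
  linarith [norm_add_le ((_root_.cfc f (T n) - Polynomial.aeval (T n) p) * (a : 𝓜(ℂ, A)) -
    (_root_.cfc f L - Polynomial.aeval L p) * (a : 𝓜(ℂ, A)))
    (Polynomial.aeval (T n) p * (a : 𝓜(ℂ, A)) - Polynomial.aeval L p * (a : 𝓜(ℂ, A)))]

end StrictTendsto

/-- A σ-unital C⋆-algebra has an increasing sequential approximate unit of positive contractions,
written here in the form `star (b k) * b k`. -/
lemma SigmaUnital.exists_monotone_approximateUnit [PartialOrder 𝓜(ℂ, A)]
    [StarOrderedRing 𝓜(ℂ, A)] (hσ : SigmaUnital A) :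
    ∃ b : ℕ → A,
      Monotone (fun k => star (b k : 𝓜(ℂ, A)) * (b k : 𝓜(ℂ, A))) ∧
      (∀ k, star (b k : 𝓜(ℂ, A)) * (b k : 𝓜(ℂ, A)) ≤ 1) ∧
      ∀ a : A, Tendsto (fun k => star (b k) * b k * a) atTop (𝓝 a) := by
  obtain ⟨e, he⟩ := hσ
  let _ : PartialOrder A := CStarAlgebra.spectralOrder A
  have _ : StarOrderedRing A := CStarAlgebra.spectralOrderedRing A
  have step : ∀ (k : ℕ) (y : {y : A // 0 ≤ y ∧ ‖y‖ < 1}), ∃ z : {y : A // 0 ≤ y ∧ ‖y‖ < 1},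
      (y : A) ≤ z ∧ ∀ j ≤ k, ‖(z : A) * e j - e j‖ < 1 / ((k : ℝ) + 1) := by
    rintro k ⟨y, hy⟩
    have hfreq : ∃ᶠ z in CStarAlgebra.approximateUnit A, 0 ≤ z ∧ ‖z‖ < 1 :=
      (CStarAlgebra.hasBasis_approximateUnit A).frequently_iff.2 fun x hx =>
        ⟨x, ⟨le_refl x, by simpa using hx.2.le⟩, hx⟩
    have hge : ∀ᶠ z in CStarAlgebra.approximateUnit A, y ≤ z :=
      mem_of_superset ((CStarAlgebra.hasBasis_approximateUnit A).mem_of_mem hy) fun z hz => hz.1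
    have hnear : ∀ᶠ z in CStarAlgebra.approximateUnit A,
        ∀ j ∈ Set.Iic k, ‖z * e j - e j‖ < 1 / ((k : ℝ) + 1) :=
      (Set.finite_Iic k).eventually_all.2 fun j _ => by
        have := (CStarAlgebra.increasingApproximateUnit A).tendsto_mul_right (e j)
        simpa only [dist_eq_norm] using
          this.eventually (Metric.ball_mem_nhds _ Nat.one_div_pos_of_nat)
    obtain ⟨z, hz, hyz, hze⟩ := (hfreq.and_eventually (hge.and hnear)).exists
    exact ⟨⟨z, hz⟩, hyz, hze⟩
  choose next hnext_le hnext using step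
  obtain ⟨f, hf_succ⟩ : ∃ f : ℕ → {y : A // 0 ≤ y ∧ ‖y‖ < 1}, ∀ n, f (n + 1) = next n (f n) :=
    ⟨fun n => Nat.rec ⟨0, le_rfl, by simp⟩ next n, fun _ => rfl⟩
  have hf_le : ∀ n, (f n : A) ≤ (f (n + 1) : A) := fun n => by
    rw [hf_succ]
    exact hnext_le n (f n)
  have hf : ∀ n, ∀ j ≤ n, ‖(f (n + 1) : A) * e j - e j‖ < 1 / ((n : ℝ) + 1) := fun n => by
    rw [hf_succ]
    exact hnext n (f n)
  choose b hb using fun n => CStarAlgebra.nonneg_iff_eq_star_mul_self.1 (f n).2.1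
  have hcoe : ∀ n, star (b n : 𝓜(ℂ, A)) * (b n : 𝓜(ℂ, A)) = ((f n : A) : 𝓜(ℂ, A)) := fun n => by
    rw [star_coe, coe_mul_eq, hb]
  refine ⟨b, monotone_nat_of_le_succ fun n => ?_, fun n => ?_, fun a => ?_⟩
  · obtain ⟨c, hc⟩ := CStarAlgebra.nonneg_iff_eq_star_mul_self.1 (sub_nonneg.2 (hf_le n))
    rw [hcoe, hcoe, ← sub_nonneg, coe_sub_eq, hc, ← coe_mul_eq, ← star_coe]
    exact star_mul_self_nonneg _
  · rw [← CStarAlgebra.norm_le_one_iff_of_nonneg _ (star_mul_self_nonneg _), hcoe, norm_coe]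
    exact (f n).2.2.le
  · simp only [← hb]
    have hej : ∀ j, Tendsto (fun n => (f n : A) * e j) atTop (𝓝 (e j)) := fun j => by
      rw [← tendsto_add_atTop_iff_nat 1, tendsto_iff_norm_sub_tendsto_zero]
      refine squeeze_zero' (.of_forall fun _ => norm_nonneg _) ?_
        tendsto_one_div_add_atTop_nhds_zero_nat
      filter_upwards [eventually_ge_atTop j] with n hn using (hf n j hn).le
    refine Metric.tendsto_atTop.2 fun ε hε => ?_
    obtain ⟨j, hj⟩ := ((he a).2.eventually_lt_const (show (0 : ℝ) < ε / 3 by positivity)).exists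
    obtain ⟨N, hN⟩ := Metric.tendsto_atTop.1 ((hej j).mul_const a) (ε / 3) (by positivity)
    refine ⟨N, fun n hn => ?_⟩
    have h₁ := hN n hn
    rw [dist_eq_norm] at h₁ ⊢
    have key : (f n : A) * a - a =
        (f n : A) * (a - e j * a) - (a - e j * a) + ((f n : A) * e j * a - e j * a) := by
      rw [mul_sub, mul_assoc]
      abel
    have h₂ : ‖(f n : A) * (a - e j * a)‖ ≤ ‖a - e j * a‖ :=
      (norm_mul_le _ _).trans (mul_le_of_le_one_left (norm_nonneg _) (f n).2.2.le)
    rw [key]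
    linarith [norm_add_le ((f n : A) * (a - e j * a) - (a - e j * a))
      ((f n : A) * e j * a - e j * a), norm_sub_le ((f n : A) * (a - e j * a)) (a - e j * a)]

/-- A tracial weight that is normal along increasing sequences is sequentially lower
semicontinuous on positive multipliers for the strict topology. -/
lemma IsTracialWeight.le_liminf_of_strictTendsto [PartialOrder 𝓜(ℂ, A)]
    [StarOrderedRing 𝓜(ℂ, A)] (hσ : SigmaUnital A) {τ : 𝓜(ℂ, A) → ℝ≥0∞}
    (hτ : IsTracialWeight τ)
    (hnormal : ∀ (x : 𝓜(ℂ, A)) (u : ℕ → 𝓜(ℂ, A)), 0 ≤ x → (∀ n, 0 ≤ u n) →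
      Monotone u → StrictTendsto u x → τ x = ⨆ n, τ (u n))
    {x : 𝓜(ℂ, A)} {u : ℕ → 𝓜(ℂ, A)} (hu : ∀ n, 0 ≤ u n) (h : StrictTendsto u x) :
    τ x ≤ liminf (fun n => τ (u n)) atTop := by
  obtain ⟨b, hmono, hle, hlim⟩ := hσ.exists_monotone_approximateUnit
  have hx : 0 ≤ x := h.nonneg hu
  have hsa : ∀ y : 𝓜(ℂ, A), star (CFC.sqrt y) = CFC.sqrt y := fun y =>
    (IsSelfAdjoint.of_nonneg (CFC.sqrt_nonneg y)).star_eq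
  have htrace : ∀ (y : 𝓜(ℂ, A)) (c : 𝓜(ℂ, A)), 0 ≤ y →
      τ (c * y * star c) = τ (star (CFC.sqrt y) * (star c * c) * CFC.sqrt y) := fun y c hy => by
    have e₁ : c * y * star c = (c * CFC.sqrt y) * star (c * CFC.sqrt y) := by
      nth_rw 1 [← CFC.sqrt_mul_sqrt_self y hy]
      rw [star_mul, hsa]
      simp only [mul_assoc]
    rw [e₁, hτ.2.2.1, star_mul]
    simp only [mul_assoc]
  have hstrict : StrictTendsto
      (fun k => star (CFC.sqrt x) * (star (b k : 𝓜(ℂ, A)) * (b k : 𝓜(ℂ, A))) * CFC.sqrt x) x := by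
    refine .of_isSelfAdjoint (fun k => IsSelfAdjoint.of_nonneg
      (star_left_conjugate_nonneg (star_mul_self_nonneg _) _)) (.of_nonneg hx) fun a => ?_
    have h₁ : Tendsto (fun k => star (b k : 𝓜(ℂ, A)) * (b k : 𝓜(ℂ, A)) *
        (CFC.sqrt x * (a : 𝓜(ℂ, A)))) atTop (𝓝 (CFC.sqrt x * (a : 𝓜(ℂ, A)))) := by
      rw [mul_coe, tendsto_iff_norm_sub_tendsto_zero]
      simpa only [star_coe, coe_mul_eq, coe_sub_eq, norm_coe] using
        tendsto_iff_norm_sub_tendsto_zero.1 (hlim ((CFC.sqrt x).fst a))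
    have h₂ := h₁.const_mul (star (CFC.sqrt x))
    rw [← mul_assoc (star _), hsa, CFC.sqrt_mul_sqrt_self x hx] at h₂
    simpa only [hsa, mul_assoc] using h₂
  have hmono' : Monotone fun k =>
      star (CFC.sqrt x) * (star (b k : 𝓜(ℂ, A)) * (b k : 𝓜(ℂ, A))) * CFC.sqrt x :=
    fun i j hij => star_left_conjugate_le_conjugate (hmono hij) _
  rw [hnormal x _ hx (fun k => star_left_conjugate_nonneg (star_mul_self_nonneg _) _) hmono'
    hstrict]
  refine iSup_le fun k => ?_
  rw [← htrace x _ hx]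
  have hnorm : Tendsto (fun n => ‖(b k : 𝓜(ℂ, A)) * u n * star (b k : 𝓜(ℂ, A)) -
      (b k : 𝓜(ℂ, A)) * x * star (b k : 𝓜(ℂ, A))‖) atTop (𝓝 0) :=
    tendsto_iff_norm_sub_tendsto_zero.1 ((h.tendsto_coe_mul (b k)).mul_const _)
  refine (hτ.2.2.2 _ _ (star_right_conjugate_nonneg hx _)
    (fun n => star_right_conjugate_nonneg (hu n) _) hnorm).trans ?_
  refine liminf_le_liminf (.of_forall fun n => ?_)
  rw [htrace _ _ (hu n)]
  refine hτ.mono (star_left_conjugate_nonneg (star_mul_self_nonneg _) _) ?_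
  calc _ ≤ star (CFC.sqrt (u n)) * 1 * CFC.sqrt (u n) :=
        star_left_conjugate_le_conjugate (hle k) _
    _ = u n := by rw [mul_one, hsa, CFC.sqrt_mul_sqrt_self _ (hu n)]

end MultiplierAlgebra

theorem stmt_16 {A : Type*} [NonUnitalCStarAlgebra A]
    [PartialOrder 𝓜(ℂ, A)] [StarOrderedRing 𝓜(ℂ, A)] (hσ : SigmaUnital A)
    (τ : 𝓜(ℂ, A) → ℝ≥0∞) (hτ : IsTracialWeight τ)
    (hnormal : ∀ (x : 𝓜(ℂ, A)) (u : ℕ → 𝓜(ℂ, A)), 0 ≤ x → (∀ n, 0 ≤ u n) →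
      Monotone u → StrictTendsto u x → τ x = ⨆ n, τ (u n))
    (T : ℕ → 𝓜(ℂ, A)) (L : 𝓜(ℂ, A)) (hpos : ∀ n, 0 ≤ T n) (hL : ‖L‖ ≤ 1)
    (hmono : ∀ n, T n ≤ T (n + 1)) (hstrict : StrictTendsto T L)
    (δ : ℝ) (hδ : 0 ≤ δ) :
    Monotone (fun n => dimFn τ (cutoff (T n) δ)) ∧
      (⨆ n, dimFn τ (cutoff (T n) δ)) = dimFn τ (cutoff L δ) := by
  have hT : Monotone T := monotone_nat_of_le_succ hmono
  have hle : ∀ n, T n ≤ L := hstrict.le_of_monotone hT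
  have hT₁ : ∀ n, ‖T n‖ ≤ 1 := fun n =>
    (CStarAlgebra.norm_le_norm_of_nonneg_of_le (hpos n) (hle n)).trans hL
  refine ⟨fun m n hmn => hτ.dimFn_cutoff_mono (hpos m) (hT hmn) (hT₁ n) hδ, le_antisymm
    (iSup_le fun n => hτ.dimFn_cutoff_mono (hpos n) (hle n) hL hδ) (iSup_le fun N => ?_)⟩
  have hN : (0 : ℝ) ≤ 1 / (N + 1) := by positivity
  have hcomp : ∀ a : 𝓜(ℂ, A), 0 ≤ a →
      cfc (fun t : ℝ => t ^ ((1 : ℝ) / (N + 1))) (cutoff a δ) =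
        cfc (fun t : ℝ => max (t - δ) 0 ^ ((1 : ℝ) / (N + 1))) a := fun a ha => by
    have hsa : IsSelfAdjoint a := .of_nonneg ha
    exact (cfc_comp' (fun t : ℝ => t ^ ((1 : ℝ) / (N + 1))) (fun t : ℝ => max (t - δ) 0) a
      (Real.continuous_rpow_const hN).continuousOn).symm
  have hcont : Continuous fun t : ℝ => max (t - δ) 0 ^ ((1 : ℝ) / (N + 1)) :=
    (Real.continuous_rpow_const hN).comp (by fun_prop)
  have hroot := hstrict.cfc hpos hT₁ hL hcont.continuousOn
  have hroot₀ : ∀ n, 0 ≤ cfc (fun t : ℝ => max (t - δ) 0 ^ ((1 : ℝ) / (N + 1))) (T n) := fun n =>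
    cfc_nonneg fun t _ => Real.rpow_nonneg (le_max_right _ _) _
  have hlsc := hτ.le_liminf_of_strictTendsto hσ hnormal hroot₀ hroot
  rw [← hcomp L (hstrict.nonneg hpos)] at hlsc
  refine hlsc.trans (liminf_le_of_le (by isBoundedDefault) fun c hc => ?_)
  obtain ⟨n, hn⟩ := hc.exists
  rw [← hcomp (T n) (hpos n)] at hn
  refine hn.trans (le_iSup_of_le n ?_)
  exact le_iSup (fun N : ℕ => τ (cfc (fun t : ℝ => t ^ ((1 : ℝ) / (N + 1))) (cutoff (T n) δ))) N
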